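/- Let S be a nonempty finite set, z : S → ℝ_{≥0}, and x : S → [0,1] with Σ_{j∈S} x_j > 0, and let t = ⌈ Σ_{j∈S} x_j ⌉. Then t ≤ |S|, and the sum of the t largest values among { z_j : j ∈ S } is at least Σ_{j∈S} z_j·x_j; equivalently, there exists T ⊆ S with |T| = t and Σ_{j∈T} z_j ≥ Σ_{j∈S} z_j·x_j. -/

import Mathlib

/-!
The weights `x` carry total mass at most `t`. If `T` consists of `t` indices with the largest
values, the mass that `x` puts outside `T` fits into the room `∑ j ∈ T, (1 - x j)` left inside `T`.
Moving it there can only increase the weighted sum of values, and filling up the remaining room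
does no harm because the values are nonnegative.
-/

open Finset

theorem exists_subset_card_eq_forall_le {ι α : Type*} [LinearOrder α] (S : Finset ι) (f : ι → α)
    {n : ℕ} (hn : n ≤ #S) :
    ∃ T ⊆ S, #T = n ∧ ∀ i ∈ S, i ∉ T → ∀ j ∈ T, f i ≤ f j := by
  classical
  induction n with
  | zero => exact ⟨∅, by simp⟩
  | succ n ih =>
    obtain ⟨T, hTS, hcard, hT⟩ := ih (Nat.le_of_succ_le hn)
    have hne : (S \ T).Nonempty := sdiff_nonempty_of_card_lt_card (by omega)
    obtain ⟨m, hm, hmax⟩ := exists_max_image (S \ T) f hne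
    obtain ⟨hmS, hmT⟩ := mem_sdiff.1 hm
    refine ⟨insert m T, insert_subset hmS hTS, by rw [card_insert_of_notMem hmT, hcard], ?_⟩
    intro i hi hiT
    rw [mem_insert, not_or] at hiT
    exact forall_mem_insert _ _ _ |>.2 ⟨hmax i (mem_sdiff.2 ⟨hi, hiT.2⟩), hT i hi hiT.2⟩

theorem ceil_sum_le_card {ι R : Type*} [Semiring R] [PartialOrder R] [IsOrderedRing R]
    [FloorSemiring R] {S : Finset ι} {x : ι → R} (hx : ∀ j ∈ S, x j ≤ 1) :
    ⌈∑ j ∈ S, x j⌉₊ ≤ #S :=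
  Nat.ceil_le.2 <| by simpa using sum_le_card_nsmul S x 1 hx

theorem sum_smul_le_sum_smul_of_forall_le {ι κ R M : Type*} [Semiring R] [PartialOrder R]
    [AddCommMonoid M] [LinearOrder M] [IsOrderedAddMonoid M]
    [Module R M] [PosSMulMono R M] [SMulPosMono R M]
    {U : Finset ι} {T : Finset κ} {u : ι → R} {v : κ → R}
    {f : ι → M} {g : κ → M} (hu : ∀ i ∈ U, 0 ≤ u i) (hv : ∀ j ∈ T, 0 ≤ v j)
    (huv : ∑ i ∈ U, u i ≤ ∑ j ∈ T, v j) (hg : ∀ j ∈ T, 0 ≤ g j)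
    (hfg : ∀ i ∈ U, ∀ j ∈ T, f i ≤ g j) :
    ∑ i ∈ U, u i • f i ≤ ∑ j ∈ T, v j • g j := by
  -- A threshold between `f` and `g`; the base value `0` keeps it nonnegative, so it can scale `huv`.
  let c : M := U.fold max 0 f
  have hc : 0 ≤ c := le_fold_max _ |>.2 (.inl le_rfl)
  have hfc : ∀ i ∈ U, f i ≤ c := fun i hi => le_fold_max _ |>.2 (.inr ⟨i, hi, le_rfl⟩)
  have hcg : ∀ j ∈ T, c ≤ g j := fun j hj => fold_max_le _ |>.2 ⟨hg j hj, (hfg · · j hj)⟩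
  calc ∑ i ∈ U, u i • f i
      ≤ ∑ i ∈ U, u i • c := sum_le_sum fun i hi => smul_le_smul_of_nonneg_left (hfc i hi) (hu i hi)
    _ = (∑ i ∈ U, u i) • c := sum_smul.symm
    _ ≤ (∑ j ∈ T, v j) • c := smul_le_smul_of_nonneg_right huv hc
    _ = ∑ j ∈ T, v j • c := sum_smul
    _ ≤ ∑ j ∈ T, v j • g j :=
      sum_le_sum fun j hj => smul_le_smul_of_nonneg_left (hcg j hj) (hv j hj)

section OrderedModule

variable {ι R M : Type*} [Ring R] [PartialOrder R] [IsOrderedRing R]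
  [AddCommGroup M] [LinearOrder M] [IsOrderedAddMonoid M]
  [Module R M] [PosSMulMono R M] [SMulPosMono R M]

theorem sum_smul_le_sum_of_sum_le_card {S T : Finset ι} {x : ι → R} {z : ι → M} (hTS : T ⊆ S)
    (hx : ∀ j ∈ S, x j ∈ Set.Icc 0 1) (hcard : ∑ j ∈ S, x j ≤ #T) (hz : ∀ j ∈ T, 0 ≤ z j)
    (hT : ∀ i ∈ S, i ∉ T → ∀ j ∈ T, z i ≤ z j) :
    ∑ j ∈ S, x j • z j ≤ ∑ j ∈ T, z j := by
  classical
  have hmass : ∑ i ∈ S \ T, x i ≤ ∑ j ∈ T, (1 - x j) := by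
    simpa [sum_sub_distrib, le_sub_iff_add_le, sum_sdiff hTS] using hcard
  have hmove : ∑ i ∈ S \ T, x i • z i ≤ ∑ j ∈ T, (1 - x j) • z j :=
    sum_smul_le_sum_smul_of_forall_le (fun i hi => (hx i (sdiff_subset hi)).1)
      (fun j hj => sub_nonneg.2 (hx j (hTS hj)).2) hmass hz
      (fun i hi => hT i (mem_sdiff.1 hi).1 (mem_sdiff.1 hi).2)
  calc ∑ j ∈ S, x j • z j
      = ∑ i ∈ S \ T, x i • z i + ∑ j ∈ T, x j • z j := (sum_sdiff hTS).symm
    _ ≤ ∑ j ∈ T, (1 - x j) • z j + ∑ j ∈ T, x j • z j := by gcongr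
    _ = ∑ j ∈ T, z j := by simp [← sum_add_distrib, ← add_smul]

theorem ceil_largest_values_cover_general [FloorSemiring R]
    (S : Finset ι) (z : ι → M) (x : ι → R) (hz : ∀ j ∈ S, 0 ≤ z j)
    (hx : ∀ j ∈ S, x j ∈ Set.Icc 0 1) :
    ⌈∑ j ∈ S, x j⌉₊ ≤ #S ∧
    ∃ T ⊆ S, #T = ⌈∑ j ∈ S, x j⌉₊ ∧ ∑ j ∈ S, x j • z j ≤ ∑ j ∈ T, z j := by
  have hceil : ⌈∑ j ∈ S, x j⌉₊ ≤ #S := ceil_sum_le_card fun j hj => (hx j hj).2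
  obtain ⟨T, hTS, hcard, hT⟩ := exists_subset_card_eq_forall_le S z hceil
  have hle : ∑ j ∈ S, x j ≤ #T := Nat.ceil_le.1 hcard.ge
  exact ⟨hceil, T, hTS, hcard,
    sum_smul_le_sum_of_sum_le_card hTS hx hle (fun j hj => hz j (hTS hj)) hT⟩

end OrderedModule

/-- Let `S` be a nonempty finite set, `z : S → ℝ_{≥0}`, `x : S → [0,1]` with
`Σ_{j∈S} x_j > 0`, and `t = ⌈Σ_{j∈S} x_j⌉`. Then `t ≤ |S|`, and there exists `T ⊆ S`
with `|T| = t` and `Σ_{j∈T} z_j ≥ Σ_{j∈S} z_j·x_j` (equivalently, the sum of the `t`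
largest values among `{z_j : j ∈ S}` is at least `Σ_{j∈S} z_j·x_j`). -/
theorem ceil_largest_values_cover {ι : Type*} [DecidableEq ι]
    (S : Finset ι) (hS : S.Nonempty)
    (z x : ι → ℝ) (hz : ∀ j ∈ S, 0 ≤ z j)
    (hx : ∀ j ∈ S, x j ∈ Set.Icc (0 : ℝ) 1)
    (hsum : 0 < ∑ j ∈ S, x j) :
    ⌈∑ j ∈ S, x j⌉₊ ≤ S.card ∧
    ∃ T ⊆ S, T.card = ⌈∑ j ∈ S, x j⌉₊ ∧
      ∑ j ∈ T, z j ≥ ∑ j ∈ S, z j * x j := by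
  simpa only [smul_eq_mul, mul_comm] using ceil_largest_values_cover_general S z x hz hx
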